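/- Let b = 3·(√3 − 1)/4, v₀(x) = 3·exp(−b·x)/(exp(b·x) + exp(−b·x)), and v₁(x,t) = −(9/2)·(3·√3 − 4)·t/(exp(b·x) + exp(−b·x))². Then the function v₂(x,t) = (27/8)·(43 − 24·√3)·(exp(b·x) − exp(−b·x))·t²/(exp(b·x) + exp(−b·x))³ satisfies v₂(x,0) = 0 for all x, and for all real x, t: ∂v₂/∂t(x,t) = ∂²v₁/∂x²(x,t) + 2·v₀(x)·∂v₁/∂x(x,t) + 2·v₁(x,t)·v₀'(x) + 8·v₀(x)·v₁(x,t) − 3·v₁(x,t) − 3·v₁(x,t)·v₀(x)². -/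

import Mathlib

/-!
Write `E = exp (b x)`, `F = exp (-b x)`, `S = E + F`, `D = E - F` and `T = D / S`, so that `E F = 1`
and `4 / S² = 1 - T²`. Then `v₀ = (3/2) (1 - T)`, and dividing the right-hand side of the recursion
by `v₁` leaves a quadratic polynomial in `T`. Its constant and `T²` coefficients are multiples
of `2 b² + 3 b - 9/4`, which vanishes for `b = 3 (√3 - 1) / 4`; the `T` coefficient is `3/2 - 6 b`,
and `(3 √3 - 4)² = 43 - 24 √3` turns it into the coefficient of `v₂`.
-/

noncomputable def b : ℝ := 3 * (Real.sqrt 3 - 1) / 4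

noncomputable def v₀ : ℝ → ℝ := fun x =>
  3 * Real.exp (-b * x) / (Real.exp (b * x) + Real.exp (-b * x))

noncomputable def v₁ : ℝ → ℝ → ℝ := fun x t =>
  -(9/2) * (3 * Real.sqrt 3 - 4) * t / (Real.exp (b * x) + Real.exp (-b * x))^2

noncomputable def v₂ : ℝ → ℝ → ℝ := fun x t =>
  (27/8) * (43 - 24 * Real.sqrt 3) * (Real.exp (b * x) - Real.exp (-b * x)) * t^2 /
    (Real.exp (b * x) + Real.exp (-b * x))^3

lemma hasDerivAt_exp_pos (x : ℝ) :
    HasDerivAt (fun y => Real.exp (b * y)) (b * Real.exp (b * x)) x := by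
  have h := ((hasDerivAt_id x).const_mul b).exp
  simpa [mul_comm] using h

lemma hasDerivAt_exp_neg (x : ℝ) :
    HasDerivAt (fun y => Real.exp (-b * y)) (-b * Real.exp (-b * x)) x := by
  have h := ((hasDerivAt_id x).const_mul (-b)).exp
  simpa [mul_comm] using h

lemma exp_sum_pos (x : ℝ) : 0 < Real.exp (b * x) + Real.exp (-b * x) := by positivity

lemma exp_mul_exp_neg (x : ℝ) : Real.exp (b * x) * Real.exp (-b * x) = 1 := by
  rw [← Real.exp_add]; simp

lemma hasDerivAt_v₀ (x : ℝ) :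
    HasDerivAt v₀ (-6 * b / (Real.exp (b * x) + Real.exp (-b * x)) ^ 2) x := by
  have hS := (exp_sum_pos x).ne'
  have h := ((hasDerivAt_exp_neg x).const_mul 3).div
    ((hasDerivAt_exp_pos x).add (hasDerivAt_exp_neg x)) hS
  refine h.congr_deriv ?_
  simp only [Pi.add_apply]
  congr 1
  linear_combination (-6 * b) * exp_mul_exp_neg x

lemma hasDerivAt_v₁ (x t : ℝ) :
    HasDerivAt (fun y => v₁ y t)
      (9 * (3 * Real.sqrt 3 - 4) * t * b * (Real.exp (b * x) - Real.exp (-b * x)) /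
        (Real.exp (b * x) + Real.exp (-b * x)) ^ 3) x := by
  have hS := (exp_sum_pos x).ne'
  have h := (hasDerivAt_const x (-(9/2) * (3 * Real.sqrt 3 - 4) * t)).div
    (((hasDerivAt_exp_pos x).add (hasDerivAt_exp_neg x)).pow 2) (pow_ne_zero 2 hS)
  refine h.congr_deriv ?_
  simp only [Pi.add_apply, Pi.pow_apply]
  field_simp
  ring

lemma hasDerivAt_deriv_v₁ (x t : ℝ) :
    HasDerivAt (deriv (fun y => v₁ y t))
      (9 * (3 * Real.sqrt 3 - 4) * t * b ^ 2 *
        ((Real.exp (b * x) + Real.exp (-b * x)) ^ 2 -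
          3 * (Real.exp (b * x) - Real.exp (-b * x)) ^ 2) /
        (Real.exp (b * x) + Real.exp (-b * x)) ^ 4) x := by
  have hS := (exp_sum_pos x).ne'
  rw [show deriv (fun y => v₁ y t) = _ from funext fun y => (hasDerivAt_v₁ y t).deriv]
  have h := (((hasDerivAt_exp_pos x).sub (hasDerivAt_exp_neg x)).const_mul
    (9 * (3 * Real.sqrt 3 - 4) * t * b)).div
    (((hasDerivAt_exp_pos x).add (hasDerivAt_exp_neg x)).pow 3) (pow_ne_zero 3 hS)
  refine h.congr_deriv ?_
  simp only [Pi.add_apply, Pi.sub_apply, Pi.pow_apply]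
  field_simp
  ring

lemma hasDerivAt_v₂ (x t : ℝ) :
    HasDerivAt (fun s => v₂ x s)
      ((27/4) * (43 - 24 * Real.sqrt 3) * (Real.exp (b * x) - Real.exp (-b * x)) * t /
        (Real.exp (b * x) + Real.exp (-b * x)) ^ 3) t := by
  have h := (((hasDerivAt_id t).pow 2).const_mul
    ((27/8) * (43 - 24 * Real.sqrt 3) * (Real.exp (b * x) - Real.exp (-b * x)))).div_const
    ((Real.exp (b * x) + Real.exp (-b * x)) ^ 3)
  refine h.congr_deriv ?_
  simp only [id]
  ring

theorem hpm_caseIII_order2 :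
    (∀ x : ℝ, v₂ x 0 = 0) ∧
    (∀ x t : ℝ,
      deriv (fun s => v₂ x s) t =
        deriv (deriv (fun y => v₁ y t)) x +
          2 * v₀ x * deriv (fun y => v₁ y t) x +
          2 * v₁ x t * deriv v₀ x +
          8 * v₀ x * v₁ x t - 3 * v₁ x t - 3 * v₁ x t * (v₀ x)^2) := by
  refine ⟨fun x => by simp [v₂], fun x t => ?_⟩
  rw [(hasDerivAt_v₂ x t).deriv, (hasDerivAt_deriv_v₁ x t).deriv, (hasDerivAt_v₁ x t).deriv,
    (hasDerivAt_v₀ x).deriv]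
  simp only [v₀, v₁]
  have hS := (exp_sum_pos x).ne'
  have hEF := exp_mul_exp_neg x
  have hr : Real.sqrt 3 ^ 2 = 3 := Real.sq_sqrt (by norm_num)
  have hb : b = 3 * (Real.sqrt 3 - 1) / 4 := rfl
  generalize Real.exp (b * x) = E at *
  generalize Real.exp (-b * x) = F at *
  generalize Real.sqrt 3 = r at *
  have hb2 : b ^ 2 = 9 / 8 - 3 / 2 * b := by rw [hb]; linear_combination (9 / 16) * hr
  have hrb : r = 4 / 3 * b + 1 := by rw [hb]; ring
  -- Multiplying the numerator of the derivative of `v₀` by `E F = 1` makes the identity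
  -- homogeneous in `E, F`.
  rw [show -6 * b / (E + F) ^ 2 = -6 * b * (E * F) / (E + F) ^ 2 by rw [hEF, mul_one]]
  generalize b = c at *
  subst hrb
  field_simp
  linear_combination (-24 * t * (9 * (4 * c - 1) * ((E + F) ^ 2 - 3 * (E - F) ^ 2) +
    108 * (E - F) * (E + F))) * hb2
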